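/- arXiv:1403.1682 — 4 statements merged into one kernel-verified Lean document; each statement's English description precedes it below -/
import Mathlib

section
/- For every k, the sequence 0 → D^k → H^k_BC → H^k_∂̄ → E^k → F^k → 0 is exact, where D^k → H^k_BC and H^k_BC → H^k_∂̄ are induced by the inclusions of representatives, H^k_∂̄ → E^k is induced by the identity on representatives, and E^k → F^k is induced by the quotient projection on representatives (Varouchas exact sequence). -/
open Submodule LinearMap Module

section Setup

variable (U : ℤ → Type*) [∀ k, AddCommGroup (U k)] [∀ k, Module ℂ (U k)]

/-- The identification `U a → U b` induced by an equality `a = b` of degrees. -/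
def castU {a b : ℤ} (h : a = b) : U a →ₗ[ℂ] U b := by subst h; exact LinearMap.id

variable (D : ∀ k : ℤ, U k →ₗ[ℂ] U (k + 1)) (Db : ∀ k : ℤ, U k →ₗ[ℂ] U (k - 1))

/-- The composite `∂∂̄ : U^k → U^{k-1} → U^k`. -/
def ddbar (k : ℤ) : U k →ₗ[ℂ] U k :=
  (castU U (show k - 1 + 1 = k by ring)).comp ((D (k - 1)).comp (Db k))

/-- `ker ∂ ∩ U^k` -/
def kerD (k : ℤ) : Submodule ℂ (U k) := LinearMap.ker (D k)

/-- `ker ∂̄ ∩ U^k` -/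
def kerDb (k : ℤ) : Submodule ℂ (U k) := LinearMap.ker (Db k)

/-- `∂(U^{k-1})` -/
def imD (k : ℤ) : Submodule ℂ (U k) :=
  LinearMap.range ((castU U (show k - 1 + 1 = k by ring)).comp (D (k - 1)))

/-- `∂̄(U^{k+1})` -/
def imDb (k : ℤ) : Submodule ℂ (U k) :=
  LinearMap.range ((castU U (show k + 1 - 1 = k by ring)).comp (Db (k + 1)))

/-- `ker (∂∂̄) ∩ U^k` -/
def kerDDbar (k : ℤ) : Submodule ℂ (U k) := LinearMap.ker (ddbar U D Db k)

/-- `(∂∂̄)(U^k)` -/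
def imDDbar (k : ℤ) : Submodule ℂ (U k) := LinearMap.range (ddbar U D Db k)

end Setup

/-- The quotient of a submodule `p` by (the preimage in `p` of) a submodule `q`. -/
abbrev SubQuot {V : Type*} [AddCommGroup V] [Module ℂ V] (p q : Submodule ℂ V) :=
  ↥p ⧸ q.comap p.subtype

/-- The map `p/q → p'/q'` induced by the identity (inclusion) on representatives. -/
def qmap {V : Type*} [AddCommGroup V] [Module ℂ V] {p p' q q' : Submodule ℂ V}
    (hp : p ≤ p') (hq : q ≤ q') : SubQuot p q →ₗ[ℂ] SubQuot p' q' :=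
  Submodule.mapQ _ _ (Submodule.inclusion hp) fun x hx => by
    simp only [Submodule.mem_comap, Submodule.subtype_apply, Submodule.coe_inclusion] at hx ⊢
    exact hq hx

section Cohomology

variable (U : ℤ → Type*) [∀ k, AddCommGroup (U k)] [∀ k, Module ℂ (U k)]
variable (D : ∀ k : ℤ, U k →ₗ[ℂ] U (k + 1)) (Db : ∀ k : ℤ, U k →ₗ[ℂ] U (k - 1))

/-- `H^k_∂ = (ker ∂ ∩ U^k)/∂(U^{k-1})` -/
abbrev Hd (k : ℤ) := SubQuot (kerD U D k) (imD U D k)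

/-- `H^k_∂̄ = (ker ∂̄ ∩ U^k)/∂̄(U^{k+1})` -/
abbrev Hdb (k : ℤ) := SubQuot (kerDb U Db k) (imDb U Db k)

/-- `H^k_BC = (ker ∂ ∩ ker ∂̄ ∩ U^k)/(∂∂̄)(U^k)` -/
abbrev HBC (k : ℤ) := SubQuot (kerD U D k ⊓ kerDb U Db k) (imDDbar U D Db k)

/-- `H^k_A = (ker (∂∂̄) ∩ U^k)/(∂(U^{k-1}) + ∂̄(U^{k+1}))` -/
abbrev HA (k : ℤ) := SubQuot (kerDDbar U D Db k) (imD U D k ⊔ imDb U Db k)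

/-- `A^k = (∂(U^{k-1}) ∩ ∂̄(U^{k+1}))/(∂∂̄)(U^k)` -/
abbrev Avar (k : ℤ) := SubQuot (imD U D k ⊓ imDb U Db k) (imDDbar U D Db k)

/-- `B^k = (ker ∂̄ ∩ ∂(U^{k-1}))/(∂∂̄)(U^k)` -/
abbrev Bvar (k : ℤ) := SubQuot (kerDb U Db k ⊓ imD U D k) (imDDbar U D Db k)

/-- `C^k = (ker (∂∂̄) ∩ U^k)/((ker ∂̄ ∩ U^k) + ∂(U^{k-1}))` -/
abbrev Cvar (k : ℤ) := SubQuot (kerDDbar U D Db k) (kerDb U Db k ⊔ imD U D k)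

/-- `D^k = (ker ∂ ∩ ∂̄(U^{k+1}))/(∂∂̄)(U^k)` -/
abbrev Dvar (k : ℤ) := SubQuot (kerD U D k ⊓ imDb U Db k) (imDDbar U D Db k)

/-- `E^k = (ker (∂∂̄) ∩ U^k)/((ker ∂ ∩ U^k) + ∂̄(U^{k+1}))` -/
abbrev Evar (k : ℤ) := SubQuot (kerDDbar U D Db k) (kerD U D k ⊔ imDb U Db k)

/-- `F^k = (ker (∂∂̄) ∩ U^k)/((ker ∂ ∩ U^k) + (ker ∂̄ ∩ U^k))` -/
abbrev Fvar (k : ℤ) := SubQuot (kerDDbar U D Db k) (kerD U D k ⊔ kerDb U Db k)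

end Cohomology
section InducedMapLemmas

variable (U : ℤ → Type*) [∀ k, AddCommGroup (U k)] [∀ k, Module ℂ (U k)]
variable (D : ∀ k : ℤ, U k →ₗ[ℂ] U (k + 1)) (Db : ∀ k : ℤ, U k →ₗ[ℂ] U (k - 1))

lemma Db_castU {a b : ℤ} (h : a = b) (x : U a) :
    Db b (castU U h x) = castU U (show a - 1 = b - 1 by rw [h]) (Db a x) := by
  subst h; rfl

lemma imDb_le_kerDb (hDb2 : ∀ k : ℤ, (Db (k - 1)).comp (Db k) = 0) (k : ℤ) :
    imDb U Db k ≤ kerDb U Db k := by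
  rintro x ⟨y, rfl⟩
  have h0 : Db (k + 1 - 1) (Db (k + 1) y) = 0 := by
    simpa using DFunLike.congr_fun (hDb2 (k + 1)) y
  simp only [kerDb, LinearMap.mem_ker, LinearMap.comp_apply, Db_castU, h0, map_zero]

lemma imDDbar_le_imDb
    (hanti : ∀ k : ℤ, ddbar U D Db k
      + (castU U (show k + 1 - 1 = k by ring)).comp ((Db (k + 1)).comp (D k)) = 0)
    (k : ℤ) : imDDbar U D Db k ≤ imDb U Db k := by
  rintro x ⟨y, rfl⟩
  refine ⟨-(D k y), ?_⟩
  have h := DFunLike.congr_fun (hanti k) y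
  simp only [LinearMap.add_apply, LinearMap.comp_apply, LinearMap.zero_apply] at h
  simp only [LinearMap.comp_apply, map_neg]
  exact neg_eq_of_add_eq_zero_left h

lemma kerDb_le_kerDDbar (k : ℤ) : kerDb U Db k ≤ kerDDbar U D Db k := by
  intro x hx
  have hx' : Db k x = 0 := hx
  simp only [kerDDbar, LinearMap.mem_ker, ddbar, LinearMap.comp_apply, hx', map_zero]

end InducedMapLemmas
section Maps

variable (U : ℤ → Type*) [∀ k, AddCommGroup (U k)] [∀ k, Module ℂ (U k)]
variable (D : ∀ k : ℤ, U k →ₗ[ℂ] U (k + 1)) (Db : ∀ k : ℤ, U k →ₗ[ℂ] U (k - 1))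
variable (hDb2 : ∀ k : ℤ, (Db (k - 1)).comp (Db k) = 0)
variable (hanti : ∀ k : ℤ, ddbar U D Db k
  + (castU U (show k + 1 - 1 = k by ring)).comp ((Db (k + 1)).comp (D k)) = 0)

/-- `D^k → H^k_BC`, induced by the inclusion of representatives. -/
def mapDH (k : ℤ) : Dvar U D Db k →ₗ[ℂ] HBC U D Db k :=
  qmap (le_inf inf_le_left (inf_le_right.trans (imDb_le_kerDb U Db hDb2 k))) le_rfl

/-- `H^k_BC → H^k_∂̄`, induced by the inclusion of representatives. -/
def mapBCH (k : ℤ) : HBC U D Db k →ₗ[ℂ] Hdb U Db k :=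
  qmap inf_le_right (imDDbar_le_imDb U D Db hanti k)

/-- `H^k_∂̄ → E^k`, induced by the identity on representatives. -/
def mapHE (k : ℤ) : Hdb U Db k →ₗ[ℂ] Evar U D Db k :=
  qmap (kerDb_le_kerDDbar U D Db k) le_sup_right

/-- `E^k → F^k`, induced by the quotient projection on representatives. -/
def mapEF (k : ℤ) : Evar U D Db k →ₗ[ℂ] Fvar U D Db k :=
  qmap le_rfl (sup_le le_sup_left ((imDb_le_kerDb U Db hDb2 k).trans le_sup_right))

end Maps

/-- Exactness criterion for maps of subquotients induced by the identity. -/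
theorem qmap_exact {V : Type*} [AddCommGroup V] [Module ℂ V]
    {p p' p'' q q' q'' : Submodule ℂ V}
    (hp : p ≤ p') (hq : q ≤ q') (hp' : p' ≤ p'') (hq' : q' ≤ q'')
    (h1 : p ≤ q'') (h2 : p' ⊓ q'' ≤ p ⊔ q') :
    Function.Exact (qmap hp hq) (qmap hp' hq') := by
  intro y
  obtain ⟨⟨x, hx⟩, rfl⟩ := Submodule.Quotient.mk_surjective _ y
  constructor
  · intro h
    have hx2 : x ∈ q'' := by
      have h' := (Submodule.Quotient.mk_eq_zero _).1 h
      exact h'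
    obtain ⟨a, ha, b, hb, hab⟩ := Submodule.mem_sup.1 (h2 ⟨hx, hx2⟩)
    refine ⟨Submodule.Quotient.mk ⟨a, ha⟩, ?_⟩
    refine (Submodule.Quotient.eq _).2 ?_
    change a - x ∈ q'
    have : a - x = -b := by rw [← hab]; abel
    rw [this]
    exact q'.neg_mem hb
  · rintro ⟨z, hz⟩
    obtain ⟨⟨a, ha⟩, rfl⟩ := Submodule.Quotient.mk_surjective _ z
    rw [← hz]
    refine (Submodule.Quotient.mk_eq_zero _).2 ?_
    exact h1 ha

/-- the Varouchas sequence `0 → D^k → H^k_BC → H^k_∂̄ → E^k → F^k → 0`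
is exact. -/
theorem varouchas_exact_sequence_two
    (n : ℕ) (U : ℤ → Type*) [∀ k, AddCommGroup (U k)] [∀ k, Module ℂ (U k)]
    (hvan : ∀ k : ℤ, (n : ℤ) < |k| → ∀ x : U k, x = 0)
    (D : ∀ k : ℤ, U k →ₗ[ℂ] U (k + 1)) (Db : ∀ k : ℤ, U k →ₗ[ℂ] U (k - 1))
    (hD2 : ∀ k : ℤ, (D (k + 1)).comp (D k) = 0)
    (hDb2 : ∀ k : ℤ, (Db (k - 1)).comp (Db k) = 0)
    (hanti : ∀ k : ℤ, ddbar U D Db k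
      + (castU U (show k + 1 - 1 = k by ring)).comp ((Db (k + 1)).comp (D k)) = 0)
    (k : ℤ) :
    Function.Injective ⇑(mapDH U D Db hDb2 k) ∧
    Function.Exact ⇑(mapDH U D Db hDb2 k) ⇑(mapBCH U D Db hanti k) ∧
    Function.Exact ⇑(mapBCH U D Db hanti k) ⇑(mapHE U D Db k) ∧
    Function.Exact ⇑(mapHE U D Db k) ⇑(mapEF U D Db hDb2 k) ∧
    Function.Surjective ⇑(mapEF U D Db hDb2 k) := by
  have hle := imDb_le_kerDb U Db hDb2 k
  refine ⟨?_, ?_, ?_, ?_, ?_⟩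
  · rw [injective_iff_map_eq_zero]
    intro y hy
    obtain ⟨⟨x, hx⟩, rfl⟩ := Submodule.Quotient.mk_surjective _ y
    have h' := (Submodule.Quotient.mk_eq_zero _).1 hy
    exact (Submodule.Quotient.mk_eq_zero _).2 h'
  · refine qmap_exact _ _ _ _ inf_le_right ?_
    exact le_sup_of_le_left (le_inf (inf_le_left.trans inf_le_left) inf_le_right)
  · refine qmap_exact _ _ _ _ (inf_le_left.trans le_sup_left) ?_
    rintro x ⟨hx, hx2⟩
    obtain ⟨a, ha, b, hb, rfl⟩ := Submodule.mem_sup.1 hx2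
    refine Submodule.add_mem_sup ⟨ha, ?_⟩ hb
    exact (Submodule.add_mem_iff_left _ (hle hb)).1 hx
  · refine qmap_exact _ _ _ _ le_sup_right ?_
    exact inf_le_right.trans (sup_le (le_sup_of_le_right le_sup_left) le_sup_left)
  · intro y
    obtain ⟨x, rfl⟩ := Submodule.Quotient.mk_surjective _ y
    exact ⟨Submodule.Quotient.mk x, rfl⟩
end

section
/- Suppose that in degree k the spaces H^k_∂̄, H^k_A, A^k, B^k, C^k are finite-dimensional. Then dim H^k_A + dim B^k = dim H^k_∂̄ + dim A^k + dim C^k. -/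
open Submodule LinearMap Module

theorem sq_chain {V : Type*} [AddCommGroup V] [Module ℂ V] {p q r : Submodule ℂ V}
    (hqp : q ≤ p) (hrq : r ≤ q) [FiniteDimensional ℂ (SubQuot p r)] :
    finrank ℂ (SubQuot p r) = finrank ℂ (SubQuot p q) + finrank ℂ (SubQuot q r) := by
  have hg : Function.Surjective (qmap (le_refl p) hrq) := by
    intro x
    obtain ⟨y, rfl⟩ := Submodule.Quotient.mk_surjective _ x
    exact ⟨Submodule.Quotient.mk y, rfl⟩
  have hf : Function.Injective (qmap hqp (le_refl r)) := by
    rw [injective_iff_map_eq_zero]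
    intro x hx
    obtain ⟨y, rfl⟩ := Submodule.Quotient.mk_surjective _ x
    have hx' : (Submodule.Quotient.mk (Submodule.inclusion hqp y) : SubQuot p r) = 0 := hx
    rw [Submodule.Quotient.mk_eq_zero] at hx' ⊢
    exact hx'
  have hk : LinearMap.range (qmap hqp (le_refl r)) = LinearMap.ker (qmap (le_refl p) hrq) := by
    ext x
    obtain ⟨y, rfl⟩ := Submodule.Quotient.mk_surjective _ x
    constructor
    · rintro ⟨z, hz⟩
      obtain ⟨w, rfl⟩ := Submodule.Quotient.mk_surjective _ z
      rw [← hz, LinearMap.mem_ker]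
      change (Submodule.Quotient.mk (Submodule.inclusion hqp w) : SubQuot p q) = 0
      rw [Submodule.Quotient.mk_eq_zero]
      exact w.2
    · intro hy
      have hy' : (Submodule.Quotient.mk y : SubQuot p q) = 0 := hy
      rw [Submodule.Quotient.mk_eq_zero] at hy'
      exact ⟨Submodule.Quotient.mk ⟨y.1, hy'⟩, rfl⟩
  have h := LinearMap.finrank_range_add_finrank_ker (qmap (le_refl p) hrq)
  rw [← hk, LinearMap.finrank_range_of_inj hf, LinearMap.range_eq_top.2 hg, finrank_top] at h
  exact h.symm

theorem sq_iso {V : Type*} [AddCommGroup V] [Module ℂ V] (p q : Submodule ℂ V) :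
    finrank ℂ (SubQuot (p ⊔ q) q) = finrank ℂ (SubQuot p (p ⊓ q)) :=
  (LinearMap.quotientInfEquivSupQuotient p q).finrank_eq.symm

theorem sq_abstract {V : Type*} [AddCommGroup V] [Module ℂ V] {K I J Z W : Submodule ℂ V}
    (hWI : W ≤ I) (hWJ : W ≤ J) (hJK : J ≤ K) (hKZ : K ≤ Z) (hIZ : I ≤ Z)
    [FiniteDimensional ℂ (SubQuot K J)] [FiniteDimensional ℂ (SubQuot Z (I ⊔ J))]
    [FiniteDimensional ℂ (SubQuot (K ⊓ I) W)] :
    finrank ℂ (SubQuot Z (I ⊔ J)) + finrank ℂ (SubQuot (K ⊓ I) W)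
      = finrank ℂ (SubQuot K J) + finrank ℂ (SubQuot (I ⊓ J) W)
        + finrank ℂ (SubQuot Z (K ⊔ I)) := by
  have e1 := sq_chain (p := Z) (q := K ⊔ I) (r := I ⊔ J) (sup_le hKZ hIZ)
    (sup_le le_sup_right (hJK.trans le_sup_left))
  have e2 := sq_iso K (I ⊔ J)
  have e3 : K ⊔ (I ⊔ J) = K ⊔ I := by
    rw [sup_comm I J, ← sup_assoc, sup_eq_left.2 hJK]
  have e4 : K ⊓ (I ⊔ J) = K ⊓ I ⊔ J := (inf_sup_assoc_of_le I hJK).symm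
  rw [e3, e4] at e2
  have e5 := sq_chain (p := K) (q := K ⊓ I ⊔ J) (r := J) (sup_le inf_le_left hJK) le_sup_right
  have e6 := sq_iso (K ⊓ I) J
  have e7 : K ⊓ I ⊓ J = I ⊓ J := by
    rw [inf_assoc, inf_eq_right]
    exact inf_le_right.trans hJK
  rw [e7] at e6
  have e8 := sq_chain (p := K ⊓ I) (q := I ⊓ J) (r := W)
    (le_inf (inf_le_right.trans hJK) inf_le_left) (le_inf hWI hWJ)
  omega

theorem castU_D (U : ℤ → Type*) [∀ k, AddCommGroup (U k)] [∀ k, Module ℂ (U k)]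
    (D : ∀ k : ℤ, U k →ₗ[ℂ] U (k + 1)) (hD2 : ∀ k : ℤ, (D (k + 1)).comp (D k) = 0)
    {a b : ℤ} (h : a + 1 = b) (x : U a) : D b (castU U h (D a x)) = 0 := by
  subst h
  exact LinearMap.congr_fun (hD2 a) x

theorem castU_Db (U : ℤ → Type*) [∀ k, AddCommGroup (U k)] [∀ k, Module ℂ (U k)]
    (D : ∀ k : ℤ, U k →ₗ[ℂ] U (k - 1)) (hD2 : ∀ k : ℤ, (D (k - 1)).comp (D k) = 0)
    {a b : ℤ} (h : a - 1 = b) (x : U a) : D b (castU U h (D a x)) = 0 := by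
  subst h
  exact LinearMap.congr_fun (hD2 a) x

/-- the Varouchas dimension identity
`dim H^k_A + dim B^k = dim H^k_∂̄ + dim A^k + dim C^k`. -/
theorem varouchas_dim_identity_one
    (n : ℕ) (U : ℤ → Type*) [∀ k, AddCommGroup (U k)] [∀ k, Module ℂ (U k)]
    (hvan : ∀ k : ℤ, (n : ℤ) < |k| → ∀ x : U k, x = 0)
    (D : ∀ k : ℤ, U k →ₗ[ℂ] U (k + 1)) (Db : ∀ k : ℤ, U k →ₗ[ℂ] U (k - 1))
    (hD2 : ∀ k : ℤ, (D (k + 1)).comp (D k) = 0)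
    (hDb2 : ∀ k : ℤ, (Db (k - 1)).comp (Db k) = 0)
    (hanti : ∀ k : ℤ, ddbar U D Db k
      + (castU U (show k + 1 - 1 = k by ring)).comp ((Db (k + 1)).comp (D k)) = 0)
    (k : ℤ)
    (h1 : FiniteDimensional ℂ (Hdb U Db k))
    (h2 : FiniteDimensional ℂ (HA U D Db k))
    (h3 : FiniteDimensional ℂ (Avar U D Db k))
    (h4 : FiniteDimensional ℂ (Bvar U D Db k))
    (h5 : FiniteDimensional ℂ (Cvar U D Db k)) :
    finrank ℂ (HA U D Db k) + finrank ℂ (Bvar U D Db k)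
      = finrank ℂ (Hdb U Db k) + finrank ℂ (Avar U D Db k) + finrank ℂ (Cvar U D Db k) := by
  have ha : ∀ x, ddbar U D Db k x
      = - castU U (show k + 1 - 1 = k by ring) (Db (k + 1) (D k x)) := fun x =>
    eq_neg_of_add_eq_zero_left (LinearMap.congr_fun (hanti k) x)
  refine sq_abstract ?_ ?_ ?_ ?_ ?_
  · rintro _ ⟨x, rfl⟩
    exact ⟨Db k x, rfl⟩
  · rintro _ ⟨x, rfl⟩
    refine ⟨- D k x, ?_⟩
    rw [ha, map_neg]
    rfl
  · rintro _ ⟨x, rfl⟩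
    exact castU_Db U Db hDb2 _ x
  · intro x hx
    have hx' : Db k x = 0 := hx
    change castU U _ (D (k - 1) (Db k x)) = 0
    rw [hx', map_zero, map_zero]
  · rintro _ ⟨x, rfl⟩
    change ddbar U D Db k (castU U _ (D (k - 1) x)) = 0
    rw [ha, castU_D U D hD2, map_zero, map_zero, neg_zero]
end

section
/- Suppose that for all p, q ≥ 0 the spaces H^{p,q}_BC, H^{p,q}_∂ and H^{p,q}_∂̄ are finite-dimensional with dim H^{p,q}_BC = dim H^{p,q}_∂ = dim H^{p,q}_∂̄, and that there exists N ∈ ℕ with A^{p,q} = 0 whenever p ≥ N and q ≥ N. Then for all p, q ≥ 0 the maps φ^{p,q}_- and φ^{p,q}_+ are isomorphisms, and the ∂∂̄-lemma holds on A^{p,q}, i.e. ker ∂̄ ∩ ∂(A^{p-1,q}) = ker ∂ ∩ ∂̄(A^{p,q-1}) = (∂∂̄)(A^{p-1,q-1}) as subspaces of A^{p,q}. -/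
open Submodule LinearMap Module

section Setup

variable (A : ℤ → ℤ → Type*) [∀ p q, AddCommGroup (A p q)] [∀ p q, Module ℂ (A p q)]

/-- The identification `A p q → A p' q'` induced by equalities of the bidegrees. -/
def castA {p q p' q' : ℤ} (h : p = p') (h' : q = q') : A p q →ₗ[ℂ] A p' q' := by
  subst h; subst h'; exact LinearMap.id

variable (d : ∀ p q : ℤ, A p q →ₗ[ℂ] A (p + 1) q) (db : ∀ p q : ℤ, A p q →ₗ[ℂ] A p (q + 1))

/-- The composite `∂∂̄ : A^{p,q} → A^{p+1,q} → A^{p+1,q+1}`. -/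
def ddb (p q : ℤ) : A p q →ₗ[ℂ] A (p + 1) (q + 1) := (db (p + 1) q).comp (d p q)

/-- `ker ∂ ∩ A^{p,q}` -/
def kerd (p q : ℤ) : Submodule ℂ (A p q) := LinearMap.ker (d p q)

/-- `ker ∂̄ ∩ A^{p,q}` -/
def kerdb (p q : ℤ) : Submodule ℂ (A p q) := LinearMap.ker (db p q)

/-- `∂(A^{p-1,q})` -/
def imd (p q : ℤ) : Submodule ℂ (A p q) :=
  LinearMap.range ((castA A (show p - 1 + 1 = p by ring) rfl).comp (d (p - 1) q))

/-- `∂̄(A^{p,q-1})` -/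
def imdb (p q : ℤ) : Submodule ℂ (A p q) :=
  LinearMap.range ((castA A rfl (show q - 1 + 1 = q by ring)).comp (db p (q - 1)))

/-- `(∂∂̄)(A^{p-1,q-1})` -/
def imddb (p q : ℤ) : Submodule ℂ (A p q) :=
  LinearMap.range
    ((castA A (show p - 1 + 1 = p by ring) (show q - 1 + 1 = q by ring)).comp
      (ddb A d db (p - 1) (q - 1)))

end Setup

section Cohomology

variable (A : ℤ → ℤ → Type*) [∀ p q, AddCommGroup (A p q)] [∀ p q, Module ℂ (A p q)]
variable (d : ∀ p q : ℤ, A p q →ₗ[ℂ] A (p + 1) q) (db : ∀ p q : ℤ, A p q →ₗ[ℂ] A p (q + 1))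

/-- `H^{p,q}_∂ = (ker ∂ ∩ A^{p,q})/∂(A^{p-1,q})` -/
abbrev Hpqd (p q : ℤ) := SubQuot (kerd A d p q) (imd A d p q)

/-- `H^{p,q}_∂̄ = (ker ∂̄ ∩ A^{p,q})/∂̄(A^{p,q-1})` -/
abbrev Hpqdb (p q : ℤ) := SubQuot (kerdb A db p q) (imdb A db p q)

/-- `H^{p,q}_BC = (ker ∂ ∩ ker ∂̄ ∩ A^{p,q})/(∂∂̄)(A^{p-1,q-1})` -/
abbrev HpqBC (p q : ℤ) := SubQuot (kerd A d p q ⊓ kerdb A db p q) (imddb A d db p q)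

end Cohomology

section Lemmas

variable (A : ℤ → ℤ → Type*) [∀ p q, AddCommGroup (A p q)] [∀ p q, Module ℂ (A p q)]
variable (d : ∀ p q : ℤ, A p q →ₗ[ℂ] A (p + 1) q) (db : ∀ p q : ℤ, A p q →ₗ[ℂ] A p (q + 1))

lemma castA_castA {p q p' q' p'' q'' : ℤ} (h1 : p = p') (h2 : q = q') (h3 : p' = p'')
    (h4 : q' = q'') (x : A p q) :
    castA A h3 h4 (castA A h1 h2 x) = castA A (h1.trans h3) (h2.trans h4) x := by
  subst h1; subst h2; subst h3; subst h4; rfl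

lemma d_castA {p q p' q' : ℤ} (h : p = p') (h' : q = q') (x : A p q) :
    d p' q' (castA A h h' x) = castA A (show p + 1 = p' + 1 by rw [h]) h' (d p q x) := by
  subst h; subst h'; rfl

lemma db_castA {p q p' q' : ℤ} (h : p = p') (h' : q = q') (x : A p q) :
    db p' q' (castA A h h' x) = castA A h (show q + 1 = q' + 1 by rw [h']) (db p q x) := by
  subst h; subst h'; rfl

lemma imddb_le_imdb (p q : ℤ) : imddb A d db p q ≤ imdb A db p q := by
  rintro x ⟨y, rfl⟩
  refine ⟨castA A (show p - 1 + 1 = p by ring) rfl (d (p - 1) (q - 1) y), ?_⟩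
  simp only [LinearMap.comp_apply, ddb, db_castA, castA_castA]

lemma imddb_le_imd
    (hanti : ∀ p q : ℤ, (db (p + 1) q).comp (d p q) + (d p (q + 1)).comp (db p q) = 0)
    (p q : ℤ) : imddb A d db p q ≤ imd A d p q := by
  rintro x ⟨y, rfl⟩
  refine ⟨-(castA A rfl (show q - 1 + 1 = q by ring) (db (p - 1) (q - 1) y)), ?_⟩
  have h := DFunLike.congr_fun (hanti (p - 1) (q - 1)) y
  simp only [LinearMap.add_apply, LinearMap.comp_apply, LinearMap.zero_apply] at h
  simp only [LinearMap.comp_apply, map_neg, d_castA, castA_castA, ddb]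
  rw [eq_neg_of_add_eq_zero_left h, map_neg]

end Lemmas

section Phi

variable (A : ℤ → ℤ → Type*) [∀ p q, AddCommGroup (A p q)] [∀ p q, Module ℂ (A p q)]
variable (d : ∀ p q : ℤ, A p q →ₗ[ℂ] A (p + 1) q) (db : ∀ p q : ℤ, A p q →ₗ[ℂ] A p (q + 1))
variable (hanti : ∀ p q : ℤ, (db (p + 1) q).comp (d p q) + (d p (q + 1)).comp (db p q) = 0)

/-- `φ^{p,q}_+ : H^{p,q}_BC → H^{p,q}_∂`, induced by the identity on representatives. -/
def phiPlus (p q : ℤ) : HpqBC A d db p q →ₗ[ℂ] Hpqd A d p q :=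
  qmap inf_le_left (imddb_le_imd A d db hanti p q)

/-- `φ^{p,q}_- : H^{p,q}_BC → H^{p,q}_∂̄`, induced by the identity on representatives. -/
def phiMinus (p q : ℤ) : HpqBC A d db p q →ₗ[ℂ] Hpqdb A db p q :=
  qmap inf_le_right (imddb_le_imdb A d db p q)

end Phi
lemma qmap_inj_iff {V : Type*} [AddCommGroup V] [Module ℂ V] {p p' q q' : Submodule ℂ V}
    (hp : p ≤ p') (hq : q ≤ q') :
    Function.Injective (qmap hp hq) ↔ ∀ x ∈ p, x ∈ q' → x ∈ q := by
  rw [← LinearMap.ker_eq_bot, LinearMap.ker_eq_bot']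
  constructor
  · intro h x hx hx'
    have := h (Submodule.Quotient.mk ⟨x, hx⟩) (by
      simp only [qmap, Submodule.mapQ_apply]
      rw [Submodule.Quotient.mk_eq_zero]
      exact hx')
    rw [Submodule.Quotient.mk_eq_zero] at this
    exact this
  · intro h m hm
    obtain ⟨⟨x, hx⟩, rfl⟩ := Submodule.Quotient.mk_surjective _ m
    simp only [qmap, Submodule.mapQ_apply] at hm
    rw [Submodule.Quotient.mk_eq_zero] at hm ⊢
    exact h x hx hm

lemma qmap_surj {V : Type*} [AddCommGroup V] [Module ℂ V] {p p' q q' : Submodule ℂ V}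
    (hp : p ≤ p') (hq : q ≤ q') (h : ∀ x ∈ p', ∃ z ∈ q', x - z ∈ p) :
    Function.Surjective (qmap hp hq) := by
  intro m
  obtain ⟨⟨x, hx⟩, rfl⟩ := Submodule.Quotient.mk_surjective _ m
  obtain ⟨z, hz, hy⟩ := h x hx
  refine ⟨Submodule.Quotient.mk ⟨x - z, hy⟩, ?_⟩
  simp only [qmap, Submodule.mapQ_apply]
  rw [Submodule.Quotient.eq]
  simp only [Submodule.mem_comap, Submodule.subtype_apply, Submodule.coe_sub,
    Submodule.coe_inclusion]
  simpa using hz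

section Steps

variable (A : ℤ → ℤ → Type*) [∀ p q, AddCommGroup (A p q)] [∀ p q, Module ℂ (A p q)]
variable (d : ∀ p q : ℤ, A p q →ₗ[ℂ] A (p + 1) q) (db : ∀ p q : ℤ, A p q →ₗ[ℂ] A p (q + 1))

lemma castA_refl {p q : ℤ} (h : p = p) (h' : q = q) (x : A p q) : castA A h h' x = x := rfl

lemma imd_le_kerd (hd2 : ∀ p q : ℤ, (d (p + 1) q).comp (d p q) = 0) (p q : ℤ) :
    imd A d p q ≤ kerd A d p q := by
  rintro x ⟨y, rfl⟩
  have h := DFunLike.congr_fun (hd2 (p - 1) q) y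
  simp only [LinearMap.comp_apply, LinearMap.zero_apply] at h
  simp only [kerd, LinearMap.mem_ker, LinearMap.comp_apply, d_castA, h, map_zero]

lemma imdb_le_kerdb (hdb2 : ∀ p q : ℤ, (db p (q + 1)).comp (db p q) = 0) (p q : ℤ) :
    imdb A db p q ≤ kerdb A db p q := by
  rintro x ⟨y, rfl⟩
  have h := DFunLike.congr_fun (hdb2 p (q - 1)) y
  simp only [LinearMap.comp_apply, LinearMap.zero_apply] at h
  simp only [kerdb, LinearMap.mem_ker, LinearMap.comp_apply, db_castA, h, map_zero]

lemma step_plus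
    (hd2 : ∀ p q : ℤ, (d (p + 1) q).comp (d p q) = 0)
    (hdb2 : ∀ p q : ℤ, (db p (q + 1)).comp (db p q) = 0)
    (hanti : ∀ p q : ℤ, (db (p + 1) q).comp (d p q) + (d p (q + 1)).comp (db p q) = 0)
    (p q : ℤ) (h : Function.Injective (phiMinus A d db p (q + 1))) :
    Function.Surjective (phiPlus A d db hanti p q) := by
  rw [phiMinus, qmap_inj_iff] at h
  refine qmap_surj _ _ fun x hx => ?_
  have hx' : d p q x = 0 := hx
  have him : db p q x ∈ imdb A db p (q + 1) :=
    ⟨castA A rfl (by ring) x, by simp only [LinearMap.comp_apply, db_castA, castA_castA, castA_refl]⟩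
  have hk : d p (q + 1) (db p q x) = 0 := by
    have h := DFunLike.congr_fun (hanti p q) x
    simpa [hx'] using h
  obtain ⟨y, hy⟩ := h _ ⟨hk, imdb_le_kerdb A db hdb2 _ _ him⟩ him
  have hz : castA A (show p - 1 + 1 = p by ring) rfl
      (d (p - 1) q (castA A rfl (show q + 1 - 1 = q by ring) y)) ∈ imd A d p q := ⟨_, rfl⟩
  refine ⟨_, hz, sub_mem hx (imd_le_kerd A d hd2 _ _ hz), ?_⟩
  change db p q _ = 0
  simp only [map_sub, ← hy, LinearMap.comp_apply, ddb, d_castA,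
    db_castA, castA_castA, sub_self]

lemma step_minus
    (hd2 : ∀ p q : ℤ, (d (p + 1) q).comp (d p q) = 0)
    (hdb2 : ∀ p q : ℤ, (db p (q + 1)).comp (db p q) = 0)
    (hanti : ∀ p q : ℤ, (db (p + 1) q).comp (d p q) + (d p (q + 1)).comp (db p q) = 0)
    (p q : ℤ) (h : Function.Injective (phiPlus A d db hanti (p + 1) q)) :
    Function.Surjective (phiMinus A d db p q) := by
  rw [phiPlus, qmap_inj_iff] at h
  refine qmap_surj _ _ fun x hx => ?_
  have hx' : db p q x = 0 := hx
  have him : d p q x ∈ imd A d (p + 1) q :=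
    ⟨castA A (by ring) rfl x, by simp only [LinearMap.comp_apply, d_castA, castA_castA, castA_refl]⟩
  have hk : db (p + 1) q (d p q x) = 0 := by
    have h := DFunLike.congr_fun (hanti p q) x
    simpa [hx'] using h
  obtain ⟨y, hy⟩ := h _ ⟨imd_le_kerd A d hd2 _ _ him, hk⟩ him
  have hz : castA A rfl (show q - 1 + 1 = q by ring)
      (db p (q - 1) (castA A (show p + 1 - 1 = p by ring) rfl (-y))) ∈ imdb A db p q := ⟨_, rfl⟩
  have ha := DFunLike.congr_fun (hanti (p + 1 - 1) (q - 1)) y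
  simp only [LinearMap.add_apply, LinearMap.comp_apply, LinearMap.zero_apply] at ha
  refine ⟨_, hz, ?_, sub_mem hx (imdb_le_kerdb A db hdb2 _ _ hz)⟩
  change d p q _ = 0
  simp only [map_sub, ← hy, LinearMap.comp_apply, ddb, d_castA,
    db_castA, castA_castA, map_neg]
  rw [eq_neg_of_add_eq_zero_left ha, map_neg, sub_self]

end Steps

/-- if all the Bott-Chern, `∂`- and `∂̄`-cohomologies have the same
(finite) dimension and the double complex vanishes for large bidegrees, then all the
maps `φ^{p,q}_±` are isomorphisms and the `∂∂̄`-lemma holds on every `A^{p,q}`. -/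
theorem equal_dims_implies_ddbar_lemma
    (A : ℤ → ℤ → Type*) [∀ p q, AddCommGroup (A p q)] [∀ p q, Module ℂ (A p q)]
    (hA0 : ∀ p q : ℤ, p < 0 ∨ q < 0 → ∀ x : A p q, x = 0)
    (d : ∀ p q : ℤ, A p q →ₗ[ℂ] A (p + 1) q) (db : ∀ p q : ℤ, A p q →ₗ[ℂ] A p (q + 1))
    (hd2 : ∀ p q : ℤ, (d (p + 1) q).comp (d p q) = 0)
    (hdb2 : ∀ p q : ℤ, (db p (q + 1)).comp (db p q) = 0)
    (hanti : ∀ p q : ℤ, (db (p + 1) q).comp (d p q) + (d p (q + 1)).comp (db p q) = 0)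
    (hfinBC : ∀ p q : ℤ, 0 ≤ p → 0 ≤ q → FiniteDimensional ℂ (HpqBC A d db p q))
    (hfind : ∀ p q : ℤ, 0 ≤ p → 0 ≤ q → FiniteDimensional ℂ (Hpqd A d p q))
    (hfindb : ∀ p q : ℤ, 0 ≤ p → 0 ≤ q → FiniteDimensional ℂ (Hpqdb A db p q))
    (hdim : ∀ p q : ℤ, 0 ≤ p → 0 ≤ q →
      finrank ℂ (HpqBC A d db p q) = finrank ℂ (Hpqd A d p q) ∧
      finrank ℂ (HpqBC A d db p q) = finrank ℂ (Hpqdb A db p q))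
    (N : ℕ) (hN : ∀ p q : ℤ, (N : ℤ) ≤ p → (N : ℤ) ≤ q → ∀ x : A p q, x = 0) :
    ∀ p q : ℤ, 0 ≤ p → 0 ≤ q →
      Function.Bijective ⇑(phiMinus A d db p q) ∧
      Function.Bijective ⇑(phiPlus A d db hanti p q) ∧
      kerdb A db p q ⊓ imd A d p q = imddb A d db p q ∧
      kerd A d p q ⊓ imdb A db p q = imddb A d db p q := by
  have hP : ∀ p q : ℤ, 0 ≤ p → 0 ≤ q → Function.Surjective (phiPlus A d db hanti p q) →
      Function.Injective (phiPlus A d db hanti p q) := fun p q hp hq h => by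
    have := hfinBC p q hp hq
    have := hfind p q hp hq
    exact (LinearMap.injective_iff_surjective_of_finrank_eq_finrank (hdim p q hp hq).1).2 h
  have hM : ∀ p q : ℤ, 0 ≤ p → 0 ≤ q → Function.Surjective (phiMinus A d db p q) →
      Function.Injective (phiMinus A d db p q) := fun p q hp hq h => by
    have := hfinBC p q hp hq
    have := hfindb p q hp hq
    exact (LinearMap.injective_iff_surjective_of_finrank_eq_finrank (hdim p q hp hq).2).2 h
  have key : ∀ n : ℕ, ∀ p q : ℤ, 0 ≤ p → 0 ≤ q → (N : ℤ) ≤ p + n → (N : ℤ) ≤ q + n →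
      Function.Injective (phiMinus A d db p q) ∧
      Function.Injective (phiPlus A d db hanti p q) := by
    intro n
    induction n with
    | zero =>
      intro p q hp hq h1 h2
      have h0 := hN p q (by simpa using h1) (by simpa using h2)
      rw [phiMinus, phiPlus, qmap_inj_iff, qmap_inj_iff]
      constructor <;> (intro x _ _; rw [h0 x]; exact zero_mem _)
    | succ n ih =>
      intro p q hp hq h1 h2
      push_cast at h1 h2
      have ih' := ih (p + 1) (q + 1) (by omega) (by omega) (by omega) (by omega)
      constructor
      · exact hM p q hp hq (step_minus A d db hd2 hdb2 hanti p q
          (hP _ _ (by omega) hq (step_plus A d db hd2 hdb2 hanti _ _ ih'.1)))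
      · exact hP p q hp hq (step_plus A d db hd2 hdb2 hanti p q
          (hM _ _ hp (by omega) (step_minus A d db hd2 hdb2 hanti _ _ ih'.2)))
  have inj : ∀ p q : ℤ, 0 ≤ p → 0 ≤ q → Function.Injective (phiMinus A d db p q) ∧
      Function.Injective (phiPlus A d db hanti p q) := fun p q hp hq =>
    key N p q hp hq (by omega) (by omega)
  intro p q hp hq
  obtain ⟨h1, h2⟩ := inj p q hp hq
  refine ⟨⟨h1, step_minus A d db hd2 hdb2 hanti p q (inj _ _ (by omega) hq).2⟩,
    ⟨h2, step_plus A d db hd2 hdb2 hanti p q (inj _ _ hp (by omega)).1⟩, ?_, ?_⟩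
  · rw [phiPlus, qmap_inj_iff] at h2
    apply le_antisymm
    · rintro x ⟨hx, hx'⟩
      exact h2 x ⟨imd_le_kerd A d hd2 _ _ hx', hx⟩ hx'
    · exact le_inf ((imddb_le_imdb A d db p q).trans (imdb_le_kerdb A db hdb2 p q))
        (imddb_le_imd A d db hanti p q)
  · rw [phiMinus, qmap_inj_iff] at h1
    apply le_antisymm
    · rintro x ⟨hx, hx'⟩
      exact h1 x ⟨hx, imdb_le_kerdb A db hdb2 _ _ hx'⟩ hx'
    · exact le_inf ((imddb_le_imd A d db hanti p q).trans (imd_le_kerd A d hd2 p q))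
        (imddb_le_imdb A d db p q)
end

section
/- Suppose that for all p, q ≥ 0 the spaces H^{p,q}_BC, H^{p,q}_∂ and H^{p,q}_∂̄ are finite-dimensional, and that there exists N ∈ ℕ with A^{p,q} = 0 whenever p ≥ N and q ≥ N. Then the following are equivalent: (i) dim H^{p,q}_BC = dim H^{p,q}_∂ = dim H^{p,q}_∂̄ for all p, q ≥ 0; (ii) the ∂∂̄-lemma holds on A^{p,q} for all p, q ≥ 0, i.e. ker ∂̄ ∩ ∂(A^{p-1,q}) = ker ∂ ∩ ∂̄(A^{p,q-1}) = (∂∂̄)(A^{p-1,q-1}) as subspaces of A^{p,q}. (This is the algebraic content of the paper's characterization: equality in the Frölicher-type inequality holds in all degrees if and only if the generalized ∂∂̄-lemma holds.) -/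
open Submodule LinearMap Module

section Helpers

lemma qmap_ker_finrank_zero_iff {V : Type*} [AddCommGroup V] [Module ℂ V]
    {K P J I : Submodule ℂ V} (hK : K ≤ P) (hJ : J ≤ I) [FiniteDimensional ℂ (SubQuot K J)] :
    finrank ℂ (LinearMap.ker (qmap hK hJ)) = 0 ↔ K ⊓ I ≤ J := by
  rw [Submodule.finrank_eq_zero, Submodule.eq_bot_iff]
  constructor
  · rintro h x ⟨hx, hxI⟩
    have := h (Submodule.Quotient.mk ⟨x, hx⟩) (by
      rw [LinearMap.mem_ker]
      change Submodule.Quotient.mk (Submodule.inclusion hK ⟨x, hx⟩) = 0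
      rw [Submodule.Quotient.mk_eq_zero]
      exact hxI)
    rw [Submodule.Quotient.mk_eq_zero] at this
    exact this
  · intro h y hy
    obtain ⟨x, rfl⟩ := Submodule.Quotient.mk_surjective _ y
    rw [LinearMap.mem_ker] at hy
    change Submodule.Quotient.mk (Submodule.inclusion hK x) = 0 at hy
    rw [Submodule.Quotient.mk_eq_zero] at hy
    rw [Submodule.Quotient.mk_eq_zero]
    exact h ⟨x.2, hy⟩

lemma finrank_balance {B H : Type*} [AddCommGroup B] [Module ℂ B] [AddCommGroup H] [Module ℂ H]
    [FiniteDimensional ℂ B] [FiniteDimensional ℂ H] (f : B →ₗ[ℂ] H) :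
    finrank ℂ B + finrank ℂ (H ⧸ LinearMap.range f) =
      finrank ℂ H + finrank ℂ (LinearMap.ker f) := by
  have h1 := LinearMap.finrank_range_add_finrank_ker f
  have h2 := Submodule.finrank_quotient_add_finrank (LinearMap.range f)
  omega

lemma finrank_le_of_ker_le {V X Y : Type*} [AddCommGroup V] [Module ℂ V] [AddCommGroup X]
    [Module ℂ X] [AddCommGroup Y] [Module ℂ Y] [FiniteDimensional ℂ X]
    (f : V →ₗ[ℂ] X) (g : V →ₗ[ℂ] Y) (hg : Function.Surjective g)
    (hfg : LinearMap.ker f ≤ LinearMap.ker g) (W : Submodule ℂ X) (hW : LinearMap.range f ≤ W) :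
    finrank ℂ Y ≤ finrank ℂ W := by
  have e := f.quotKerEquivRange
  haveI : FiniteDimensional ℂ (V ⧸ LinearMap.ker f) := Module.Finite.equiv e.symm
  have hs : Function.Surjective ((LinearMap.ker f).liftQ g hfg) := by
    intro y
    obtain ⟨x, rfl⟩ := hg y
    exact ⟨Submodule.Quotient.mk x, rfl⟩
  calc finrank ℂ Y ≤ finrank ℂ (V ⧸ LinearMap.ker f) :=
        LinearMap.finrank_le_finrank_of_surjective hs
    _ = finrank ℂ (LinearMap.range f) := e.finrank_eq
    _ ≤ finrank ℂ W := Submodule.finrank_mono hW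

/-- The cokernel of one comparison map embeds (via the other differential `L`) into the
kernel of the other comparison map. -/
lemma coker_le_ker {V W : Type*} [AddCommGroup V] [Module ℂ V] [AddCommGroup W] [Module ℂ W]
    (L : V →ₗ[ℂ] W) {K P J I : Submodule ℂ V} (hK : K ≤ P) (hJ : J ≤ I)
    {K' P' J' I' : Submodule ℂ W} (hK' : K' ≤ P') (hJ' : J' ≤ I')
    [FiniteDimensional ℂ (SubQuot K' J')] (hIP : I ≤ P)
    (hKm : ∀ x ∈ P, L x = 0 → x ∈ K)
    (hL : ∀ x ∈ P, L x ∈ K') (hLI : ∀ x, L x ∈ I')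
    (hlift : ∀ w ∈ J', ∃ z ∈ I, L z = w) :
    finrank ℂ (SubQuot P I ⧸ LinearMap.range (qmap hK hJ)) ≤
      finrank ℂ (LinearMap.ker (qmap hK' hJ')) := by
  let f : P →ₗ[ℂ] SubQuot K' J' := (Submodule.mkQ _).comp (L.restrict hL)
  let g : P →ₗ[ℂ] (SubQuot P I ⧸ LinearMap.range (qmap hK hJ)) :=
    (Submodule.mkQ _).comp (Submodule.mkQ _)
  refine finrank_le_of_ker_le f g ?_ ?_ _ ?_
  · exact (Submodule.mkQ_surjective _).comp (Submodule.mkQ_surjective _)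
  · intro x hx
    have hx' : L x ∈ J' := by
      rw [LinearMap.mem_ker] at hx
      change Submodule.Quotient.mk (L.restrict hL x) = 0 at hx
      rw [Submodule.Quotient.mk_eq_zero] at hx
      exact hx
    obtain ⟨z, hz, hzx⟩ := hlift _ hx'
    rw [LinearMap.mem_ker]
    change Submodule.Quotient.mk (Submodule.Quotient.mk x) = 0
    rw [Submodule.Quotient.mk_eq_zero]
    have hk : (x : V) - z ∈ K :=
      hKm _ (P.sub_mem x.2 (hIP hz)) (by rw [map_sub, hzx, sub_self])
    refine ⟨Submodule.Quotient.mk ⟨x - z, hk⟩, ?_⟩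
    change Submodule.Quotient.mk (Submodule.inclusion hK ⟨x - z, hk⟩) = _
    rw [Submodule.Quotient.eq]
    change ((x : V) - z) - x ∈ I
    rw [sub_sub_cancel_left]
    exact I.neg_mem hz
  · rintro _ ⟨x, rfl⟩
    rw [LinearMap.mem_ker]
    change Submodule.Quotient.mk (Submodule.inclusion hK' (L.restrict hL x)) = 0
    rw [Submodule.Quotient.mk_eq_zero]
    exact hLI _

variable (A : ℤ → ℤ → Type*) [∀ p q, AddCommGroup (A p q)] [∀ p q, Module ℂ (A p q)]
variable (d : ∀ p q : ℤ, A p q →ₗ[ℂ] A (p + 1) q) (db : ∀ p q : ℤ, A p q →ₗ[ℂ] A p (q + 1))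

lemma d_mem_imd (p q : ℤ) (x : A p q) : d p q x ∈ imd A d (p + 1) q := by
  refine ⟨castA A (show p = p + 1 - 1 by ring) rfl x, ?_⟩
  simp only [LinearMap.comp_apply, d_castA, castA_castA]
  rfl

lemma db_mem_imdb (p q : ℤ) (x : A p q) : db p q x ∈ imdb A db p (q + 1) := by
  refine ⟨castA A rfl (show q = q + 1 - 1 by ring) x, ?_⟩
  simp only [LinearMap.comp_apply, db_castA, castA_castA]
  rfl

lemma db_lift (p q : ℤ) (w : A p (q + 1)) (hw : w ∈ imddb A d db p (q + 1)) :
    ∃ z ∈ imd A d p q, db p q z = w := by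
  obtain ⟨y, rfl⟩ := hw
  refine ⟨_, ⟨castA A rfl (show q + 1 - 1 = q by ring) y, rfl⟩, ?_⟩
  simp only [LinearMap.comp_apply, d_castA, db_castA, castA_castA, ddb]

lemma d_lift
    (hanti : ∀ p q : ℤ, (db (p + 1) q).comp (d p q) + (d p (q + 1)).comp (db p q) = 0)
    (p q : ℤ) (w : A (p + 1) q) (hw : w ∈ imddb A d db (p + 1) q) :
    ∃ z ∈ imdb A db p q, d p q z = w := by
  obtain ⟨y, rfl⟩ := hw
  refine ⟨_, ⟨-castA A (show p + 1 - 1 = p by ring) rfl y, rfl⟩, ?_⟩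
  have h := DFunLike.congr_fun (hanti (p + 1 - 1) (q - 1)) y
  simp only [LinearMap.add_apply, LinearMap.comp_apply, LinearMap.zero_apply] at h
  simp only [LinearMap.comp_apply, map_neg, d_castA, db_castA, castA_castA, ddb]
  rw [eq_neg_of_add_eq_zero_left h, map_neg]

lemma diag_zero (f : ℤ → ℤ → ℕ) (N : ℕ)
    (hf : ∀ p q : ℤ, 0 ≤ p → 0 ≤ q → f p q ≤ f (p + 1) (q + 1))
    (hN : ∀ p q : ℤ, (N : ℤ) ≤ p → (N : ℤ) ≤ q → f p q = 0)
    (p q : ℤ) (hp : 0 ≤ p) (hq : 0 ≤ q) : f p q = 0 := by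
  have h : ∀ n : ℕ, f p q ≤ f (p + n) (q + n) := by
    intro n
    induction n with
    | zero => simp
    | succ k ih =>
      have := hf (p + k) (q + k) (by omega) (by omega)
      push_cast
      rw [← add_assoc, ← add_assoc]
      exact ih.trans this
  have h1 := h N
  rw [hN (p + N) (q + N) (by omega) (by omega)] at h1
  omega

end Helpers

/-- equality of the dimensions of Bott-Chern, `∂`- and `∂̄`-cohomologies
in all bidegrees is equivalent to the `∂∂̄`-lemma holding on every `A^{p,q}`. -/
theorem equal_dims_iff_ddbar_lemma
    (A : ℤ → ℤ → Type*) [∀ p q, AddCommGroup (A p q)] [∀ p q, Module ℂ (A p q)]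
    (hA0 : ∀ p q : ℤ, p < 0 ∨ q < 0 → ∀ x : A p q, x = 0)
    (d : ∀ p q : ℤ, A p q →ₗ[ℂ] A (p + 1) q) (db : ∀ p q : ℤ, A p q →ₗ[ℂ] A p (q + 1))
    (hd2 : ∀ p q : ℤ, (d (p + 1) q).comp (d p q) = 0)
    (hdb2 : ∀ p q : ℤ, (db p (q + 1)).comp (db p q) = 0)
    (hanti : ∀ p q : ℤ, (db (p + 1) q).comp (d p q) + (d p (q + 1)).comp (db p q) = 0)
    (hfinBC : ∀ p q : ℤ, 0 ≤ p → 0 ≤ q → FiniteDimensional ℂ (HpqBC A d db p q))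
    (hfind : ∀ p q : ℤ, 0 ≤ p → 0 ≤ q → FiniteDimensional ℂ (Hpqd A d p q))
    (hfindb : ∀ p q : ℤ, 0 ≤ p → 0 ≤ q → FiniteDimensional ℂ (Hpqdb A db p q))
    (N : ℕ) (hN : ∀ p q : ℤ, (N : ℤ) ≤ p → (N : ℤ) ≤ q → ∀ x : A p q, x = 0) :
    (∀ p q : ℤ, 0 ≤ p → 0 ≤ q →
        finrank ℂ (HpqBC A d db p q) = finrank ℂ (Hpqd A d p q) ∧
        finrank ℂ (HpqBC A d db p q) = finrank ℂ (Hpqdb A db p q)) ↔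
    (∀ p q : ℤ, 0 ≤ p → 0 ≤ q →
        kerdb A db p q ⊓ imd A d p q = imddb A d db p q ∧
        kerd A d p q ⊓ imdb A db p q = imddb A d db p q) := by
  have imJ : ∀ p q, imddb A d db p q ≤ imd A d p q := imddb_le_imd A d db hanti
  have imJ' : ∀ p q, imddb A d db p q ≤ imdb A db p q := imddb_le_imdb A d db
  have hI := imd_le_kerd A d hd2
  have hI' := imdb_le_kerdb A db hdb2
  -- kernels and cokernels of the comparison maps
  let kp : ℤ → ℤ → ℕ := fun p q => finrank ℂ (LinearMap.ker (phiPlus A d db hanti p q))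
  let km : ℤ → ℤ → ℕ := fun p q => finrank ℂ (LinearMap.ker (phiMinus A d db p q))
  let cp : ℤ → ℤ → ℕ := fun p q =>
    finrank ℂ (Hpqd A d p q ⧸ LinearMap.range (phiPlus A d db hanti p q))
  let cm : ℤ → ℤ → ℕ := fun p q =>
    finrank ℂ (Hpqdb A db p q ⧸ LinearMap.range (phiMinus A d db p q))
  have balp : ∀ p q : ℤ, 0 ≤ p → 0 ≤ q → finrank ℂ (HpqBC A d db p q) + cp p q =
      finrank ℂ (Hpqd A d p q) + kp p q := by
    intro p q hp hq
    haveI := hfinBC p q hp hq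
    haveI := hfind p q hp hq
    exact finrank_balance _
  have balm : ∀ p q : ℤ, 0 ≤ p → 0 ≤ q → finrank ℂ (HpqBC A d db p q) + cm p q =
      finrank ℂ (Hpqdb A db p q) + km p q := by
    intro p q hp hq
    haveI := hfinBC p q hp hq
    haveI := hfindb p q hp hq
    exact finrank_balance _
  have hcp : ∀ p q : ℤ, 0 ≤ p → 0 ≤ q → cp p q ≤ km p (q + 1) := by
    intro p q hp hq
    haveI := hfinBC p (q + 1) hp (by omega)
    refine coker_le_ker (db p q) _ _ _ _ (hI p q) (fun x hx h0 => ⟨hx, h0⟩) ?_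
      (db_mem_imdb A db p q) (db_lift A d db p q)
    intro x hx
    refine ⟨?_, hI' _ _ (db_mem_imdb A db p q x)⟩
    have h := DFunLike.congr_fun (hanti p q) x
    simp only [LinearMap.add_apply, LinearMap.comp_apply, LinearMap.zero_apply] at h
    have hx0 : d p q x = 0 := hx
    rw [hx0, map_zero, zero_add] at h
    exact h
  have hcm : ∀ p q : ℤ, 0 ≤ p → 0 ≤ q → cm p q ≤ kp (p + 1) q := by
    intro p q hp hq
    haveI := hfinBC (p + 1) q (by omega) hq
    refine coker_le_ker (d p q) _ _ _ _ (hI' p q) (fun x hx h0 => ⟨h0, hx⟩) ?_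
      (d_mem_imd A d p q) (d_lift A d db hanti p q)
    intro x hx
    refine ⟨hI _ _ (d_mem_imd A d p q x), ?_⟩
    have h := DFunLike.congr_fun (hanti p q) x
    simp only [LinearMap.add_apply, LinearMap.comp_apply, LinearMap.zero_apply] at h
    have hx0 : db p q x = 0 := hx
    rw [hx0, map_zero, add_zero] at h
    exact h
  have kp0 : ∀ p q : ℤ, 0 ≤ p → 0 ≤ q →
      (kp p q = 0 ↔ kerdb A db p q ⊓ imd A d p q = imddb A d db p q) := by
    intro p q hp hq
    haveI := hfinBC p q hp hq
    refine (qmap_ker_finrank_zero_iff _ _).trans ⟨fun h => le_antisymm ?_ ?_, fun h => ?_⟩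
    · rintro x ⟨h1, h2⟩
      exact h ⟨⟨hI _ _ h2, h1⟩, h2⟩
    · exact le_inf ((imJ' p q).trans (hI' p q)) (imJ p q)
    · rintro x ⟨⟨_, h1⟩, h2⟩
      exact h.le ⟨h1, h2⟩
  have km0 : ∀ p q : ℤ, 0 ≤ p → 0 ≤ q →
      (km p q = 0 ↔ kerd A d p q ⊓ imdb A db p q = imddb A d db p q) := by
    intro p q hp hq
    haveI := hfinBC p q hp hq
    refine (qmap_ker_finrank_zero_iff _ _).trans ⟨fun h => le_antisymm ?_ ?_, fun h => ?_⟩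
    · rintro x ⟨h1, h2⟩
      exact h ⟨⟨h1, hI' _ _ h2⟩, h2⟩
    · exact le_inf ((imJ p q).trans (hI p q)) (imJ' p q)
    · rintro x ⟨⟨h1, _⟩, h2⟩
      exact h.le ⟨h1, h2⟩
  constructor
  · intro h
    have ep : ∀ p q : ℤ, 0 ≤ p → 0 ≤ q → cp p q = kp p q := by
      intro p q hp hq
      have h1 := (h p q hp hq).1
      have h2 := balp p q hp hq
      omega
    have em : ∀ p q : ℤ, 0 ≤ p → 0 ≤ q → cm p q = km p q := by
      intro p q hp hq
      have h1 := (h p q hp hq).2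
      have h2 := balm p q hp hq
      omega
    have np : ∀ p q : ℤ, (N : ℤ) ≤ p → (N : ℤ) ≤ q → kp p q = 0 := by
      intro p q hp hq
      rw [kp0 p q (by omega) (by omega), Submodule.ext_iff]
      intro x
      rw [hN p q hp hq x]
      simp
    have nm : ∀ p q : ℤ, (N : ℤ) ≤ p → (N : ℤ) ≤ q → km p q = 0 := by
      intro p q hp hq
      rw [km0 p q (by omega) (by omega), Submodule.ext_iff]
      intro x
      rw [hN p q hp hq x]
      simp
    intro p q hp hq
    rw [← kp0 p q hp hq, ← km0 p q hp hq]
    constructor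
    · refine diag_zero kp N ?_ np p q hp hq
      intro p q hp hq
      have h1 := ep p q hp hq
      have h2 := hcp p q hp hq
      have h3 := em p (q + 1) hp (by omega)
      have h4 := hcm p (q + 1) hp (by omega)
      omega
    · refine diag_zero km N ?_ nm p q hp hq
      intro p q hp hq
      have h1 := em p q hp hq
      have h2 := hcm p q hp hq
      have h3 := ep (p + 1) q (by omega) hq
      have h4 := hcp (p + 1) q (by omega) hq
      omega
  · intro h p q hp hq
    have a1 := (kp0 p q hp hq).2 (h p q hp hq).1
    have a2 := (km0 p q hp hq).2 (h p q hp hq).2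
    have a3 := (km0 p (q + 1) hp (by omega)).2 (h p (q + 1) hp (by omega)).2
    have a4 := (kp0 (p + 1) q (by omega) hq).2 (h (p + 1) q (by omega) hq).1
    have b1 := balp p q hp hq
    have b2 := balm p q hp hq
    have b3 := hcp p q hp hq
    have b4 := hcm p q hp hq
    constructor <;> omega
end
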